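/- For any number of actions N ≥ 2 and any horizon T ≥ 1, and for any (possibly randomized) bandit policy — i.e., any sequence of maps that, given the history of previously chosen arms and observed rewards, outputs a probability distribution over the N arms from which the next arm I_t is drawn — there exists an assignment of reward distributions (Bernoulli distributions with mean vector μ ∈ [0,1]^N, rewards drawn independently across rounds) such that the expected regret satisfies E[R_T] = T·max_{i∈[N]} μ_i − E[Σ_{t=1}^T μ_{I_t}] ≥ (1/20)·min{√(NT), T}. -/

import Mathlib

/-!
Start from the environment in which every arm is a fair coin. Some arm `i` is then pulled at most
`T / N` times on average. Raise the mean of that single arm by `ε`, where `ε` is of order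
`min (√(N / T)) 1`: observations of the other arms do not reveal the change, so the laws of the two
histories have relative entropy at most `(T / N) * O(ε²) = O(1)`. By the variational (Gibbs)
inequality for relative entropy, the expected fraction of pulls of arm `i` stays bounded away from
`1` in the new environment, where each pull of another arm costs `ε`.
-/

/-- Expected sum of mean rewards collected by a (possibly randomized) bandit policy
`π` over the next `t` rounds, given the history `h` of previously chosen arms and
observed Bernoulli rewards.  `π h i` is the probability that the policy pulls arm `i`
after history `h`; when arm `i` (with Bernoulli mean `μ i`) is pulled, the reward is
`true` with probability `μ i` and `false` with probability `1 − μ i`, independently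
across rounds. -/
noncomputable def banditExpectedMeanSum (N : ℕ)
    (π : List (Fin N × Bool) → Fin N → ℝ) (μ : Fin N → ℝ) :
    ℕ → List (Fin N × Bool) → ℝ
  | 0, _ => 0
  | t + 1, h =>
      ∑ i : Fin N, π h i *
        (μ i + μ i * banditExpectedMeanSum N π μ t (h ++ [(i, true)])
          + (1 - μ i) * banditExpectedMeanSum N π μ t (h ++ [(i, false)]))

theorem exp_mul_le_one_add_mul {u : ℝ} (hu : u ∈ Set.Icc (0 : ℝ) 1) (a : ℝ) :
    Real.exp (a * u) ≤ 1 + (Real.exp a - 1) * u := by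
  have hchord := convexOn_exp.2 (Set.mem_univ 0) (Set.mem_univ a) (sub_nonneg.2 hu.2) hu.1
    (sub_add_cancel 1 u)
  simp only [smul_eq_mul, mul_zero, zero_add, Real.exp_zero, mul_one] at hchord
  rw [mul_comm a u]
  linarith

section HistoryExpectation

variable {α : Type*} [Fintype α]

/-- The expectation, as a linear functional of the final history, of a discrete-time process whose
history `h` is extended by `t` further steps, the next step being `a` with probability `p h a`. -/
noncomputable def historyExpectation (p : List α → α → ℝ) :
    ℕ → List α → (List α → ℝ) →ₗ[ℝ] ℝ
  | 0, h => LinearMap.proj h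
  | t + 1, h => ∑ a, p h a • historyExpectation p t (h ++ [a])

namespace historyExpectation

variable {p q : List α → α → ℝ}

@[simp]
theorem zero_apply (h : List α) (F : List α → ℝ) : historyExpectation p 0 h F = F h :=
  rfl

theorem succ_apply (t : ℕ) (h : List α) (F : List α → ℝ) :
    historyExpectation p (t + 1) h F = ∑ a, p h a * historyExpectation p t (h ++ [a]) F := by
  simp [historyExpectation]

theorem apply_const (hp1 : ∀ h, ∑ a, p h a = 1) (c : ℝ) (t : ℕ) (h : List α) :
    historyExpectation p t h (fun _ => c) = c := by
  induction t generalizing h with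
  | zero => rfl
  | succ t ih => simp only [succ_apply, ih, ← Finset.sum_mul, hp1, one_mul]

theorem apply_length (hp1 : ∀ h, ∑ a, p h a = 1) (t : ℕ) (h : List α) :
    historyExpectation p t h (fun h' => (h'.length : ℝ)) = h.length + t := by
  induction t generalizing h with
  | zero => simp
  | succ t ih =>
    simp only [succ_apply, ih, ← Finset.sum_mul, hp1, List.length_append, List.length_singleton]
    push_cast
    ring

theorem mono_of_length_eq (hp0 : ∀ h a, 0 ≤ p h a) {F G : List α → ℝ} {t : ℕ} {h : List α}
    (hFG : ∀ h' : List α, h'.length = h.length + t → F h' ≤ G h') :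
    historyExpectation p t h F ≤ historyExpectation p t h G := by
  induction t generalizing h with
  | zero => exact hFG h rfl
  | succ t ih =>
    simp only [succ_apply]
    gcongr with a
    · exact hp0 h a
    · refine ih fun h' hh' => hFG h' ?_
      rw [hh', List.length_append, List.length_singleton]
      ring

theorem nonneg (hp0 : ∀ h a, 0 ≤ p h a) {F : List α → ℝ} (hF : ∀ h, 0 ≤ F h) (t : ℕ)
    (h : List α) : 0 ≤ historyExpectation p t h F := by
  simpa using mono_of_length_eq (F := 0) (t := t) (h := h) hp0 fun h' _ => hF h'

theorem map_le_of_convexOn (hp0 : ∀ h a, 0 ≤ p h a) (hp1 : ∀ h, ∑ a, p h a = 1) {φ : ℝ → ℝ}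
    (hφ : ConvexOn ℝ Set.univ φ) (F : List α → ℝ) (t : ℕ) (h : List α) :
    φ (historyExpectation p t h F) ≤ historyExpectation p t h (fun h' => φ (F h')) := by
  induction t generalizing h with
  | zero => rfl
  | succ t ih =>
    simp only [succ_apply]
    calc φ (∑ a, p h a * historyExpectation p t (h ++ [a]) F)
        ≤ ∑ a, p h a * φ (historyExpectation p t (h ++ [a]) F) :=
          hφ.map_sum_le (fun a _ => hp0 h a) (hp1 h) fun _ _ => Set.mem_univ _
      _ ≤ ∑ a, p h a * historyExpectation p t (h ++ [a]) (fun h' => φ (F h')) := by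
          gcongr with a
          · exact hp0 h a
          · exact ih (h ++ [a])

theorem sum_map_of_centered (hp1 : ∀ h, ∑ a, p h a = 1) {f : α → ℝ}
    (hf : ∀ h, ∑ a, p h a * f a = 0) (t : ℕ) (h : List α) :
    historyExpectation p t h (fun h' => (h'.map f).sum) = (h.map f).sum := by
  induction t generalizing h with
  | zero => rfl
  | succ t ih =>
    simp only [succ_apply, ih, List.map_append, List.map_singleton, List.sum_append,
      List.sum_singleton, mul_add, Finset.sum_add_distrib, ← Finset.sum_mul, hp1, hf, one_mul,
      add_zero]

theorem sum_map_congr (hp1 : ∀ h, ∑ a, p h a = 1) {f g : α → ℝ}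
    (hfg : ∀ h, ∑ a, p h a * f a = ∑ a, p h a * g a) (t : ℕ) :
    historyExpectation p t [] (fun h => (h.map f).sum) =
      historyExpectation p t [] (fun h => (h.map g).sum) := by
  have hcentered : ∀ h, ∑ a, p h a * (f a - g a) = 0 := fun h => by
    simp only [mul_sub, Finset.sum_sub_distrib, hfg, sub_self]
  have hsplit : (fun h : List α => (h.map fun a => f a - g a).sum) =
      (fun h => (h.map f).sum) - fun h => (h.map g).sum := by
    funext h
    exact Multiset.sum_map_sub (m := (h : Multiset α))
  have hzero := sum_map_of_centered hp1 hcentered t []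
  rwa [hsplit, map_sub, List.map_nil, List.sum_nil, sub_eq_zero] at hzero

-- Under `hpq`, the density of the law of `p` relative to that of `q` is at most `exp (∑ l)`.
theorem mul_exp_neg_sum_map_le (hp0 : ∀ h a, 0 ≤ p h a) (hq0 : ∀ h a, 0 ≤ q h a) {l : α → ℝ}
    (hpq : ∀ h a, p h a * Real.exp (-l a) ≤ q h a) {F : List α → ℝ} (hF : ∀ h, 0 ≤ F h) (t : ℕ)
    (h : List α) :
    historyExpectation p t h (fun h' => F h' * Real.exp (-(h'.map l).sum)) ≤
      historyExpectation q t h F * Real.exp (-(h.map l).sum) := by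
  induction t generalizing h with
  | zero => rfl
  | succ t ih =>
    simp only [succ_apply, Finset.sum_mul]
    refine Finset.sum_le_sum fun a _ => ?_
    have hexp : Real.exp (-((h ++ [a]).map l).sum) =
        Real.exp (-l a) * Real.exp (-(h.map l).sum) := by
      rw [← Real.exp_add, List.map_append, List.sum_append, List.map_singleton,
        List.sum_singleton, neg_add_rev]
    have hFq := nonneg hq0 hF t (h ++ [a])
    calc p h a * historyExpectation p t (h ++ [a]) (fun h' => F h' * Real.exp (-(h'.map l).sum))
        ≤ p h a * (historyExpectation q t (h ++ [a]) F *
            (Real.exp (-l a) * Real.exp (-(h.map l).sum))) :=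
          mul_le_mul_of_nonneg_left (hexp ▸ ih (h ++ [a])) (hp0 h a)
      _ = p h a * Real.exp (-l a) *
            (historyExpectation q t (h ++ [a]) F * Real.exp (-(h.map l).sum)) := by ring
      _ ≤ q h a * (historyExpectation q t (h ++ [a]) F * Real.exp (-(h.map l).sum)) := by
          gcongr
          exact hpq h a
      _ = q h a * historyExpectation q t (h ++ [a]) F * Real.exp (-(h.map l).sum) := by ring

theorem exp_sub_sum_map_le (hp0 : ∀ h a, 0 ≤ p h a) (hp1 : ∀ h, ∑ a, p h a = 1)
    (hq0 : ∀ h a, 0 ≤ q h a) {l : α → ℝ} (hpq : ∀ h a, p h a * Real.exp (-l a) ≤ q h a)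
    (F : List α → ℝ) (t : ℕ) :
    Real.exp (historyExpectation p t [] F - historyExpectation p t [] fun h => (h.map l).sum) ≤
      historyExpectation q t [] fun h => Real.exp (F h) := by
  calc Real.exp (historyExpectation p t [] F - historyExpectation p t [] fun h => (h.map l).sum)
      = Real.exp (historyExpectation p t [] fun h => F h - (h.map l).sum) := by
        rw [← map_sub]
        rfl
    _ ≤ historyExpectation p t [] fun h => Real.exp (F h - (h.map l).sum) :=
        map_le_of_convexOn hp0 hp1 convexOn_exp _ t []
    _ = historyExpectation p t [] fun h => Real.exp (F h) * Real.exp (-(h.map l).sum) := by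
        simp only [← Real.exp_add, sub_eq_add_neg]
    _ ≤ historyExpectation q t [] fun h => Real.exp (F h) := by
        simpa using mul_exp_neg_sum_map_le hp0 hq0 hpq (fun h => (F h).exp_nonneg) t []

theorem apply_exp_mul_le (hp0 : ∀ h a, 0 ≤ p h a) (hp1 : ∀ h, ∑ a, p h a = 1) {F : List α → ℝ}
    {t : ℕ} {h : List α}
    (hF : ∀ h' : List α, h'.length = h.length + t → F h' ∈ Set.Icc (0 : ℝ) 1) (c : ℝ) :
    historyExpectation p t h (fun h' => Real.exp (c * F h')) ≤
      1 + (Real.exp c - 1) * historyExpectation p t h F := by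
  calc historyExpectation p t h (fun h' => Real.exp (c * F h'))
      ≤ historyExpectation p t h ((fun _ => 1) + (Real.exp c - 1) • F) :=
        mono_of_length_eq hp0 fun h' hh' => exp_mul_le_one_add_mul (hF h' hh') c
    _ = 1 + (Real.exp c - 1) * historyExpectation p t h F := by
        rw [map_add, map_smul, apply_const hp1, smul_eq_mul]

end historyExpectation

end HistoryExpectation

section Bernoulli

/-- The probability mass function of the Bernoulli distribution with mean `x`, defined by the same
formula for every real `x`. -/
def bernoulliMass (x : ℝ) (b : Bool) : ℝ :=
  bif b then x else 1 - x

/-- The relative entropy of the Bernoulli distribution with mean `x` with respect to the one with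
mean `y`. It is meaningful for `x ∈ [0, 1]` and `y ∈ (0, 1)`, the ratio being a junk value
when `y` is `0` or `1`. -/
noncomputable def bernoulliRelEntropy (x y : ℝ) : ℝ :=
  ∑ b, bernoulliMass x b * Real.log (bernoulliMass x b / bernoulliMass y b)

theorem sum_bernoulliMass (x : ℝ) : ∑ b, bernoulliMass x b = 1 := by
  simp [bernoulliMass]

theorem bernoulliMass_nonneg {x : ℝ} (hx : x ∈ Set.Icc (0 : ℝ) 1) (b : Bool) :
    0 ≤ bernoulliMass x b := by
  cases b
  · exact sub_nonneg.2 hx.2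
  · exact hx.1

theorem bernoulliMass_pos {x : ℝ} (hx : x ∈ Set.Ioo (0 : ℝ) 1) (b : Bool) :
    0 < bernoulliMass x b := by
  cases b
  · exact sub_pos.2 hx.2
  · exact hx.1

theorem bernoulliMass_mul_exp_neg_log_div_le {x y : ℝ} (hx : x ∈ Set.Icc (0 : ℝ) 1)
    (hy : y ∈ Set.Ioo (0 : ℝ) 1) (b : Bool) :
    bernoulliMass x b * Real.exp (-Real.log (bernoulliMass x b / bernoulliMass y b)) ≤
      bernoulliMass y b := by
  have hyb := bernoulliMass_pos hy b
  rcases (bernoulliMass_nonneg hx b).eq_or_lt with hxb | hxb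
  · rw [← hxb, zero_mul]
    exact hyb.le
  · rw [Real.exp_neg, Real.exp_log (div_pos hxb hyb), inv_div, mul_div_cancel₀ _ hxb.ne']

theorem bernoulliRelEntropy_self (x : ℝ) : bernoulliRelEntropy x x = 0 := by
  refine Finset.sum_eq_zero fun b _ => ?_
  rcases eq_or_ne (bernoulliMass x b) 0 with hb | hb
  · rw [hb, zero_mul]
  · rw [div_self hb, Real.log_one, mul_zero]

theorem bernoulliRelEntropy_half_add {ε : ℝ} (hε : |ε| < 1 / 2) :
    bernoulliRelEntropy (1 / 2) (1 / 2 + ε) = -Real.log (1 - 4 * ε ^ 2) / 2 := by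
  obtain ⟨hlow, hupp⟩ := abs_lt.1 hε
  have hplus : 1 + 2 * ε ≠ 0 := by linarith
  have hminus : 1 - 2 * ε ≠ 0 := by linarith
  have hfactor : 1 - 4 * ε ^ 2 = (1 + 2 * ε) * (1 - 2 * ε) := by ring
  have htrue : (1 / 2 : ℝ) / (1 / 2 + ε) = (1 + 2 * ε)⁻¹ := by field
  have hfalse : (1 - 1 / 2 : ℝ) / (1 - (1 / 2 + ε)) = (1 - 2 * ε)⁻¹ := by
    rw [show 1 - (1 / 2 + ε) = (1 - 2 * ε) / 2 by ring]
    field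
  simp only [bernoulliRelEntropy, bernoulliMass, Fintype.sum_bool, cond_true, cond_false, htrue,
    hfalse, Real.log_inv]
  rw [hfactor, Real.log_mul hplus hminus]
  ring

theorem bernoulliRelEntropy_half_add_le {ε : ℝ} (hε : |ε| ≤ 1 / 4) :
    bernoulliRelEntropy (1 / 2) (1 / 2 + ε) ≤ 8 / 3 * ε ^ 2 := by
  have hsq : ε ^ 2 ≤ (1 / 4) ^ 2 := sq_le_sq' (abs_le.1 hε).1 (abs_le.1 hε).2
  have hpos : 0 < 1 - 4 * ε ^ 2 := by linarith
  have hinv : (1 - 4 * ε ^ 2)⁻¹ ≤ 1 + 16 / 3 * ε ^ 2 := by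
    rw [inv_le_iff_one_le_mul₀ hpos]
    nlinarith [mul_nonneg (sq_nonneg ε) (sub_nonneg.2 hsq)]
  rw [bernoulliRelEntropy_half_add (by linarith)]
  linarith [Real.one_sub_inv_le_log_of_pos hpos]

end Bernoulli

section Bandit

variable {ι : Type*}

/-- The conditional law, given the history `h`, of the next arm and its reward when a bandit
policy `π` plays against Bernoulli arms with means `μ`. -/
def banditStepMass (π : List (ι × Bool) → ι → ℝ) (μ : ι → ℝ) (h : List (ι × Bool))
    (a : ι × Bool) : ℝ :=
  π h a.1 * bernoulliMass (μ a.1) a.2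

/-- The number of pulls of arm `i` in the history `h`. -/
def pullCount [DecidableEq ι] (i : ι) (h : List (ι × Bool)) : ℕ :=
  (h.map Prod.fst).count i

/-- The hard instance of the lower bound: arm `i` has mean `1 / 2 + ε`, all others `1 / 2`. -/
noncomputable def biasedMeans [DecidableEq ι] (i : ι) (ε : ℝ) : ι → ℝ :=
  Function.update (fun _ => 1 / 2) i (1 / 2 + ε)

theorem pullCount_le_length [DecidableEq ι] (i : ι) (h : List (ι × Bool)) :
    pullCount i h ≤ h.length :=
  List.count_le_length.trans_eq (List.length_map _)

theorem biasedMeans_mem_Ioo [DecidableEq ι] {ε : ℝ} (hε : |ε| < 1 / 2) (i j : ι) :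
    biasedMeans i ε j ∈ Set.Ioo (0 : ℝ) 1 := by
  obtain ⟨hlow, hupp⟩ := abs_lt.1 hε
  rw [biasedMeans, Function.update_apply]
  split_ifs <;> constructor <;> linarith

theorem banditStepMass_nonneg {π : List (ι × Bool) → ι → ℝ} (hπ0 : ∀ h i, 0 ≤ π h i)
    {μ : ι → ℝ} (hμ : ∀ i, μ i ∈ Set.Icc (0 : ℝ) 1) (h : List (ι × Bool)) (a : ι × Bool) :
    0 ≤ banditStepMass π μ h a :=
  mul_nonneg (hπ0 h a.1) (bernoulliMass_nonneg (hμ a.1) a.2)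

variable [Fintype ι] {π : List (ι × Bool) → ι → ℝ}

theorem sum_banditStepMass_mul (μ : ι → ℝ) (h : List (ι × Bool)) (f : ι × Bool → ℝ) :
    ∑ a, banditStepMass π μ h a * f a = ∑ i, π h i * ∑ b, bernoulliMass (μ i) b * f (i, b) := by
  simp only [banditStepMass, Fintype.sum_prod_type, Finset.mul_sum, mul_assoc]

theorem sum_banditStepMass (hπ1 : ∀ h, ∑ i, π h i = 1) (μ : ι → ℝ) (h : List (ι × Bool)) :
    ∑ a, banditStepMass π μ h a = 1 := by
  simpa only [mul_one, sum_bernoulliMass, hπ1] using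
    sum_banditStepMass_mul (π := π) μ h fun _ => 1

variable [DecidableEq ι]

theorem sum_map_fst_eq_sum_pullCount_mul (c : ι → ℝ) (h : List (ι × Bool)) :
    (h.map fun a => c a.1).sum = ∑ i, pullCount i h * c i := by
  have hcount := Finset.sum_list_map_count (h.map Prod.fst) c
  rw [List.map_map] at hcount
  simp only [nsmul_eq_mul] at hcount
  refine hcount.trans (Finset.sum_subset (Finset.subset_univ _) fun i _ hi => ?_)
  rw [List.count_eq_zero.2 (mt List.mem_toFinset.2 hi), Nat.cast_zero, zero_mul]

theorem historyExpectation_sum_map_fst {p : List (ι × Bool) → ι × Bool → ℝ} (c : ι → ℝ) (t : ℕ)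
    (h : List (ι × Bool)) :
    historyExpectation p t h (fun h' => (h'.map fun a => c a.1).sum) =
      ∑ i, historyExpectation p t h (fun h' => (pullCount i h' : ℝ)) * c i := by
  have hsum : (fun h' : List (ι × Bool) => (h'.map fun a => c a.1).sum) =
      ∑ i, c i • fun h' => (pullCount i h' : ℝ) := by
    funext h'
    simp [sum_map_fst_eq_sum_pullCount_mul, Finset.sum_apply, mul_comm]
  simp only [hsum, map_sum, map_smul, smul_eq_mul, mul_comm]

/-- The expected number of pulls of arm `i` in the first `t` rounds, when the policy `π` plays
against Bernoulli arms with means `μ`. -/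
noncomputable def expectedPullCount (π : List (ι × Bool) → ι → ℝ) (μ : ι → ℝ) (t : ℕ) (i : ι) : ℝ :=
  historyExpectation (banditStepMass π μ) t [] fun h => (pullCount i h : ℝ)

theorem expectedPullCount_nonneg (hπ0 : ∀ h i, 0 ≤ π h i) {μ : ι → ℝ}
    (hμ : ∀ i, μ i ∈ Set.Icc (0 : ℝ) 1) (t : ℕ) (i : ι) : 0 ≤ expectedPullCount π μ t i :=
  historyExpectation.nonneg (banditStepMass_nonneg hπ0 hμ) (fun h => (pullCount i h).cast_nonneg)
    t []

theorem sum_expectedPullCount (hπ1 : ∀ h, ∑ i, π h i = 1) (μ : ι → ℝ) (t : ℕ) :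
    ∑ i, expectedPullCount π μ t i = t := by
  have hlength := historyExpectation.apply_length (sum_banditStepMass hπ1 μ) t []
  have hcount := historyExpectation_sum_map_fst (p := banditStepMass π μ) (fun _ => 1) t []
  simp only [List.map_const', List.sum_replicate, nsmul_eq_mul, mul_one] at hcount
  simp only [expectedPullCount]
  rw [← hcount, hlength, List.length_nil, Nat.cast_zero, zero_add]

theorem exists_expectedPullCount_le [Nonempty ι] (hπ1 : ∀ h, ∑ i, π h i = 1) (μ : ι → ℝ)
    (t : ℕ) : ∃ i, expectedPullCount π μ t i ≤ t / Fintype.card ι := by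
  obtain ⟨i, -, hi⟩ := Finset.exists_le_of_sum_le (f := expectedPullCount π μ t)
    (g := fun _ => (t : ℝ) / Fintype.card ι) Finset.univ_nonempty (by
      rw [sum_expectedPullCount hπ1, Finset.sum_const, nsmul_eq_mul, Finset.card_univ,
        mul_div_cancel₀ _ (Nat.cast_ne_zero.2 Fintype.card_ne_zero)])
  exact ⟨i, hi⟩

theorem historyExpectation_sum_log_bernoulliMass_div (hπ1 : ∀ h, ∑ i, π h i = 1)
    (μ ν : ι → ℝ) (t : ℕ) :
    historyExpectation (banditStepMass π μ) t [] (fun h => (h.map fun a =>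
      Real.log (bernoulliMass (μ a.1) a.2 / bernoulliMass (ν a.1) a.2)).sum) =
      ∑ i, expectedPullCount π μ t i * bernoulliRelEntropy (μ i) (ν i) := by
  simp only [expectedPullCount]
  rw [← historyExpectation_sum_map_fst]
  refine historyExpectation.sum_map_congr (sum_banditStepMass hπ1 μ) (fun h => ?_) t
  simp only [sum_banditStepMass_mul, ← Finset.sum_mul, sum_bernoulliMass, one_mul,
    bernoulliRelEntropy]

theorem exp_sub_relEntropy_le (hπ0 : ∀ h i, 0 ≤ π h i) (hπ1 : ∀ h, ∑ i, π h i = 1)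
    {μ ν : ι → ℝ} (hμ : ∀ i, μ i ∈ Set.Icc (0 : ℝ) 1) (hν : ∀ i, ν i ∈ Set.Ioo (0 : ℝ) 1)
    (F : List (ι × Bool) → ℝ) (t : ℕ) :
    Real.exp (historyExpectation (banditStepMass π μ) t [] F -
      ∑ i, expectedPullCount π μ t i * bernoulliRelEntropy (μ i) (ν i)) ≤
      historyExpectation (banditStepMass π ν) t [] fun h => Real.exp (F h) := by
  rw [← historyExpectation_sum_log_bernoulliMass_div hπ1]
  -- The policy cancels in the likelihood ratio, so `l` depends only on the current arm and reward.
  refine historyExpectation.exp_sub_sum_map_le (banditStepMass_nonneg hπ0 hμ)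
    (sum_banditStepMass hπ1 μ)
    (banditStepMass_nonneg hπ0 fun i => Set.Ioo_subset_Icc_self (hν i)) (fun h a => ?_) F t
  rw [banditStepMass, mul_assoc]
  exact mul_le_mul_of_nonneg_left
    (bernoulliMass_mul_exp_neg_log_div_le (hμ a.1) (hν a.1) a.2) (hπ0 h a.1)

theorem exp_mul_sub_relEntropy_le (hπ0 : ∀ h i, 0 ≤ π h i) (hπ1 : ∀ h, ∑ i, π h i = 1)
    {μ ν : ι → ℝ} (hμ : ∀ i, μ i ∈ Set.Icc (0 : ℝ) 1) (hν : ∀ i, ν i ∈ Set.Ioo (0 : ℝ) 1)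
    {F : List (ι × Bool) → ℝ} {t : ℕ}
    (hF : ∀ h : List (ι × Bool), h.length = t → F h ∈ Set.Icc (0 : ℝ) 1) (c : ℝ) :
    Real.exp (c * historyExpectation (banditStepMass π μ) t [] F -
      ∑ i, expectedPullCount π μ t i * bernoulliRelEntropy (μ i) (ν i)) ≤
      1 + (Real.exp c - 1) * historyExpectation (banditStepMass π ν) t [] F := by
  rw [← smul_eq_mul c, ← map_smul]
  exact (exp_sub_relEntropy_le hπ0 hπ1 hμ hν (c • F) t).trans <|
    historyExpectation.apply_exp_mul_le
      (banditStepMass_nonneg hπ0 fun i => Set.Ioo_subset_Icc_self (hν i))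
      (sum_banditStepMass hπ1 ν) (fun h hh => hF h (by simpa using hh)) c

theorem historyExpectation_le_of_relEntropy_le (hπ0 : ∀ h i, 0 ≤ π h i)
    (hπ1 : ∀ h, ∑ i, π h i = 1) {μ ν : ι → ℝ} (hμ : ∀ i, μ i ∈ Set.Icc (0 : ℝ) 1)
    (hν : ∀ i, ν i ∈ Set.Ioo (0 : ℝ) 1) {F : List (ι × Bool) → ℝ} {t : ℕ}
    (hF : ∀ h : List (ι × Bool), h.length = t → F h ∈ Set.Icc (0 : ℝ) 1)
    (hFμ : historyExpectation (banditStepMass π μ) t [] F ≤ 1 / 2)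
    (hμν : ∑ i, expectedPullCount π μ t i * bernoulliRelEntropy (μ i) (ν i) ≤ 1 / 6) :
    historyExpectation (banditStepMass π ν) t [] F ≤ 7 / 9 := by
  -- Exponential moments at `-log 4` suffice: there the chord bound is `1 - 3 / 4 * F`.
  have hlog2 : 0 < Real.log 2 := Real.log_pos one_lt_two
  have hexp2 : Real.exp (-Real.log 2) = 1 / 2 := by
    rw [Real.exp_neg, Real.exp_log two_pos, one_div]
  have hexp4 : Real.exp (-2 * Real.log 2) = 1 / 4 := by
    rw [show -2 * Real.log 2 = -Real.log 2 + -Real.log 2 by ring, Real.exp_add, hexp2]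
    norm_num
  have hlower : 5 / 12 ≤ Real.exp (-Real.log 2 + -(1 / 6)) := by
    rw [Real.exp_add, hexp2]
    linarith [Real.add_one_le_exp (-(1 / 6))]
  have hmono : Real.exp (-Real.log 2 + -(1 / 6)) ≤
      Real.exp (-2 * Real.log 2 * historyExpectation (banditStepMass π μ) t [] F -
        ∑ i, expectedPullCount π μ t i * bernoulliRelEntropy (μ i) (ν i)) :=
    Real.exp_le_exp.2 (by linarith [mul_le_mul_of_nonneg_left hFμ hlog2.le])
  have hchange := exp_mul_sub_relEntropy_le hπ0 hπ1 hμ hν hF (-2 * Real.log 2)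
  rw [hexp4] at hchange
  linarith

theorem expectedPullCount_biasedMeans_le (hπ0 : ∀ h i, 0 ≤ π h i) (hπ1 : ∀ h, ∑ i, π h i = 1)
    {t : ℕ} (ht : 0 < t) {ε : ℝ} (hε : |ε| ≤ 1 / 4) {i : ι}
    (hhalf : expectedPullCount π (fun _ => 1 / 2) t i ≤ t / 2)
    (hinfo : 16 * ε ^ 2 * expectedPullCount π (fun _ => 1 / 2) t i ≤ 1) :
    expectedPullCount π (biasedMeans i ε) t i ≤ 7 / 9 * t := by
  have ht' : (0 : ℝ) < t := Nat.cast_pos.2 ht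
  have hfair : ∀ _ : ι, (1 / 2 : ℝ) ∈ Set.Icc 0 1 := fun _ => ⟨by norm_num, by norm_num⟩
  have hfraction : ∀ h : List (ι × Bool), h.length = t →
      ((t : ℝ)⁻¹ • fun h => (pullCount i h : ℝ)) h ∈ Set.Icc (0 : ℝ) 1 := fun h hh => by
    have hle : (pullCount i h : ℝ) ≤ t := Nat.cast_le.2 (hh ▸ pullCount_le_length i h)
    simp only [Pi.smul_apply, smul_eq_mul]
    exact ⟨by positivity, by rwa [inv_mul_le_iff₀ ht', mul_one]⟩
  have hrel : ∑ j, expectedPullCount π (fun _ => 1 / 2) t j *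
      bernoulliRelEntropy (1 / 2) (biasedMeans i ε j) ≤ 1 / 6 := by
    rw [Fintype.sum_eq_single i fun j hj => by
      rw [biasedMeans, Function.update_of_ne hj, bernoulliRelEntropy_self, mul_zero]]
    rw [biasedMeans, Function.update_self]
    linarith [mul_le_mul_of_nonneg_left (bernoulliRelEntropy_half_add_le hε)
      (expectedPullCount_nonneg hπ0 hfair t i)]
  have hbound := historyExpectation_le_of_relEntropy_le hπ0 hπ1 hfair
    (biasedMeans_mem_Ioo (by linarith) i) hfraction
    (by
      rw [map_smul, smul_eq_mul, inv_mul_le_iff₀ ht']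
      exact hhalf.trans_eq (div_eq_mul_one_div _ _)) hrel
  rwa [map_smul, smul_eq_mul, inv_mul_le_iff₀ ht', mul_comm] at hbound

end Bandit

section Regret

variable {N : ℕ} {π : List (Fin N × Bool) → Fin N → ℝ}

theorem banditExpectedMeanSum_eq_sub (hπ1 : ∀ h, ∑ i, π h i = 1) (μ : Fin N → ℝ) (t : ℕ)
    (h : List (Fin N × Bool)) :
    banditExpectedMeanSum N π μ t h =
      historyExpectation (banditStepMass π μ) t h (fun h' => (h'.map fun a => μ a.1).sum) -
        (h.map fun a => μ a.1).sum := by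
  induction t generalizing h with
  | zero => simp [banditExpectedMeanSum]
  | succ t ih =>
    rw [historyExpectation.succ_apply, sum_banditStepMass_mul, ← one_mul (h.map _).sum, ← hπ1 h,
      Finset.sum_mul, ← Finset.sum_sub_distrib, banditExpectedMeanSum]
    refine Finset.sum_congr rfl fun i _ => ?_
    simp only [ih, List.map_append, List.map_singleton, List.sum_append, List.sum_singleton,
      Fintype.sum_bool, bernoulliMass, cond_true, cond_false]
    ring

theorem banditExpectedMeanSum_nil (hπ1 : ∀ h, ∑ i, π h i = 1) (μ : Fin N → ℝ) (t : ℕ) :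
    banditExpectedMeanSum N π μ t [] =
      ∑ i, expectedPullCount π μ t i * μ i := by
  simp only [expectedPullCount]
  rw [banditExpectedMeanSum_eq_sub hπ1, historyExpectation_sum_map_fst, List.map_nil,
    List.sum_nil, sub_zero]

theorem banditExpectedMeanSum_biasedMeans (hπ1 : ∀ h, ∑ i, π h i = 1) (i : Fin N) (ε : ℝ)
    (t : ℕ) :
    banditExpectedMeanSum N π (biasedMeans i ε) t [] =
      t / 2 + ε * expectedPullCount π (biasedMeans i ε) t i := by
  have hmeans : ∀ j, biasedMeans i ε j = 1 / 2 + if j = i then ε else 0 := fun j => by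
    rw [biasedMeans, Function.update_apply]
    split_ifs <;> ring
  rw [banditExpectedMeanSum_nil hπ1]
  conv_lhs => enter [2, j]; rw [hmeans j]
  simp only [mul_add, Finset.sum_add_distrib, ← Finset.sum_mul, mul_ite, mul_zero,
    Finset.sum_ite_eq', Finset.mem_univ, if_true, sum_expectedPullCount hπ1]
  ring

theorem mul_sub_le_regret_biasedMeans (hπ1 : ∀ h, ∑ i, π h i = 1) (i : Fin N) (ε : ℝ) (t : ℕ) :
    ε * (t - expectedPullCount π (biasedMeans i ε) t i) ≤
      t * (⨆ j, biasedMeans i ε j) - banditExpectedMeanSum N π (biasedMeans i ε) t [] := by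
  have hsup : 1 / 2 + ε ≤ ⨆ j, biasedMeans i ε j := by
    refine le_ciSup_of_le (Set.finite_range (biasedMeans i ε)).bddAbove i ?_
    rw [biasedMeans, Function.update_self]
  rw [banditExpectedMeanSum_biasedMeans hπ1]
  linarith [mul_le_mul_of_nonneg_left hsup (Nat.cast_nonneg (α := ℝ) t)]

theorem exists_le_regret_biasedMeans (hπ0 : ∀ h i, 0 ≤ π h i) (hπ1 : ∀ h, ∑ i, π h i = 1)
    (hN : 2 ≤ N) {t : ℕ} (ht : 0 < t) {ε : ℝ} (hε0 : 0 ≤ ε) (hε : ε ≤ 1 / 4)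
    (hεN : 16 * ε ^ 2 * t ≤ N) :
    ∃ i, 2 / 9 * (ε * t) ≤
      t * (⨆ j, biasedMeans i ε j) - banditExpectedMeanSum N π (biasedMeans i ε) t [] := by
  have : Nonempty (Fin N) := ⟨⟨0, by omega⟩⟩
  obtain ⟨i, hi⟩ := exists_expectedPullCount_le hπ1 (fun _ => 1 / 2) t
  rw [Fintype.card_fin] at hi
  have hN' : (2 : ℝ) ≤ N := Nat.ofNat_le_cast.2 hN
  have hhalf : (t : ℝ) / N ≤ t / 2 := by gcongr
  have hinfo : 16 * ε ^ 2 * (t / N) ≤ 1 := by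
    rwa [← mul_div_assoc, div_le_one (by linarith)]
  have hpulls := expectedPullCount_biasedMeans_le hπ0 hπ1 ht ((abs_of_nonneg hε0).trans_le hε)
    (hi.trans hhalf) ((mul_le_mul_of_nonneg_left hi (by positivity)).trans hinfo)
  refine ⟨i, le_trans ?_ (mul_sub_le_regret_biasedMeans hπ1 i ε t)⟩
  linarith [mul_le_mul_of_nonneg_left hpulls hε0]

end Regret

/-- **Multi-armed bandit minimax lower bound (Auer et al.).**
For any number of actions `N ≥ 2`, any horizon `T ≥ 1`, and any randomized bandit policy
(a map from histories to probability distributions over the arms), there exists an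
assignment of Bernoulli reward distributions with means `μ ∈ [0,1]^N` such that the
expected regret `T·max_i μ_i − E[Σ_{t=1}^T μ_{I_t}]` is at least `(1/20)·min{√(NT), T}`. -/
theorem bandit_minimax_lower_bound (N T : ℕ) (hN : 2 ≤ N) (hT : 1 ≤ T)
    (π : List (Fin N × Bool) → Fin N → ℝ)
    (hπ0 : ∀ h i, 0 ≤ π h i) (hπ1 : ∀ h, ∑ i, π h i = 1) :
    ∃ μ : Fin N → ℝ, (∀ i, μ i ∈ Set.Icc (0 : ℝ) 1) ∧
      (1 / 20) * min (Real.sqrt (N * T)) (T : ℝ) ≤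
        (T : ℝ) * (⨆ i, μ i) - banditExpectedMeanSum N π μ T [] := by
  have hT' : (0 : ℝ) < T := Nat.cast_pos.2 hT
  set m := min (Real.sqrt (N * T)) (T : ℝ)
  have hm0 : 0 ≤ m := le_min (Real.sqrt_nonneg _) hT'.le
  have hmT : m ≤ T := min_le_right _ _
  have hmN : m ^ 2 ≤ N * T :=
    (Real.le_sqrt hm0 (by positivity)).1 (min_le_left _ _)
  have hε : m / (4 * T) ≤ 1 / 4 := by
    rw [div_le_div_iff₀ (by positivity) (by norm_num)]
    linarith
  have hεN : 16 * (m / (4 * T)) ^ 2 * T ≤ N := by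
    rw [show 16 * (m / (4 * T)) ^ 2 * T = m ^ 2 / T by field]
    exact (div_le_iff₀ hT').2 hmN
  obtain ⟨i, hi⟩ := exists_le_regret_biasedMeans hπ0 hπ1 hN hT (by positivity) hε hεN
  have habs : |m / (4 * T)| < 1 / 2 := by
    rw [abs_of_nonneg (by positivity)]
    linarith
  refine ⟨biasedMeans i (m / (4 * T)), fun j => Set.Ioo_subset_Icc_self
    (biasedMeans_mem_Ioo habs i j), le_trans ?_ hi⟩
  rw [show m / (4 * T) * T = m / 4 by field]
  linarith
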